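/- arXiv:2011.02653 — 2 statements merged into one kernel-verified Lean document; each statement's English description precedes it below -/
import Mathlib

section
/- Suppose n servers are placed on a √n × √n square grid torus and n users are placed independently and uniformly at random, each user being sequentially assigned to the less-loaded of its two geographically nearest servers (sPOT). Then with probability 1 − n^{−Ω(1)} the maximum server load is at least Ω(log n / log log n). -/
/-!
Write `n = k²`. The greedy choice is irrelevant for the lower bound: if `L` users have the same
nearest server `s` and the same second-nearest server `t`, then all of them join `s` or `t`,
whatever the allocation rule, so the maximum load is at least `L / 2`. It therefore suffices that,
with high probability, some pair of servers is hit `L = ⌈log n / (4 log log n)⌉` times.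

For every server `s` a box `cell s` of area `1/16` is fixed in which `s` is nearest and its right
neighbor second-nearest (`cell_second_nearest`). These `n` boxes are disjoint, and a uniform user
falls in a given one with probability `p = 1 / (16 n)`. This is a balls-into-bins problem, solved by
a second moment argument: split the users into `L` blocks of `m = ⌊n / L⌋` users and say that `s` is
good if every block has a user in `cell s`. Blocks are independent, so `s` is good with probability
`q = (1 - (1 - p)^m)^L ≥ (1 / log n)^L ≥ n^{-1/2}`. Within one block, hitting two disjoint cells is
negatively correlated, because `1 - 2p ≤ (1 - p)²`. Hence the variance of the number of good
servers is at most its mean `n q`, and Chebyshev's inequality bounds the probability that there is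
no good server by `1 / (n q) ≤ n^{-1/2}` (`second_moment`, `repeated_cell`).

The event some server is good is measurable and does not involve the allocation rule, so no
measurability of `A` is needed.
-/

open MeasureTheory

/-- The flat square torus of side `k` (the `√n × √n` grid torus has `n = k²`
servers for `k = √n`). -/
abbrev Torus (k : ℕ) := AddCircle (k : ℝ) × AddCircle (k : ℝ)

/-- Geodesic Euclidean distance on the flat torus (wrap-around). -/
noncomputable def torusDist {k : ℕ} (x y : Torus k) : ℝ :=
  Real.sqrt (dist x.1 y.1 ^ 2 + dist x.2 y.2 ^ 2)

/-- The server located at the integer grid point `s`. -/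
noncomputable def server {k : ℕ} (s : Fin k × Fin k) : Torus k :=
  (((s.1 : ℝ) : AddCircle (k : ℝ)), ((s.2 : ℝ) : AddCircle (k : ℝ)))

/-- `s` is the (unique) nearest server to the point `r`. -/
def IsNearest {k : ℕ} (s : Fin k × Fin k) (r : Torus k) : Prop :=
  ∀ t, t ≠ s → torusDist r (server s) < torusDist r (server t)

/-- `s` is the nearest and `t` the (unique) second-nearest server to `r`. -/
def IsSecondNearest {k : ℕ} (s t : Fin k × Fin k) (r : Torus k) : Prop :=
  IsNearest s r ∧ t ≠ s ∧
    ∀ u, u ≠ s → u ≠ t → torusDist r (server t) < torusDist r (server u)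

/-- `t` is a grid neighbor of `s` on the `k × k` grid with wrap-around. -/
def GridAdj {k : ℕ} [NeZero k] (s t : Fin k × Fin k) : Prop :=
  t = (s.1 + 1, s.2) ∨ t = (s.1 - 1, s.2) ∨ t = (s.1, s.2 + 1) ∨ t = (s.1, s.2 - 1)

/-- The uniform (Lebesgue/Haar) measure on the torus; a uniformly random point of
the torus is distributed according to this measure normalized by its total mass. -/
noncomputable def μT (k : ℕ) [Fact (0 < (k : ℝ))] : Measure (Torus k) :=
  (volume : Measure (AddCircle (k : ℝ))).prod volume

/-- Final load of server `v` under an allocation of `m` users to servers. -/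
def load {m : ℕ} {V : Type*} [Fintype V] [DecidableEq V] (alloc : Fin m → V) (v : V) : ℕ :=
  (Finset.univ.filter fun b => alloc b = v).card

/-- Maximum server load. -/
def maxLoad {m : ℕ} {V : Type*} [Fintype V] [DecidableEq V] (alloc : Fin m → V) : ℕ :=
  Finset.univ.sup (load alloc)

/-- Load of server `v` just before user `b` is assigned (users are processed
sequentially in the order of their indices). -/
def loadBefore {m : ℕ} {V : Type*} [Fintype V] [DecidableEq V]
    (alloc : Fin m → V) (b : Fin m) (v : V) : ℕ :=
  (Finset.univ.filter fun b' => b' < b ∧ alloc b' = v).card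

/-- `A` implements sPOT: whenever the nearest and second-nearest servers of user
`b` are (uniquely) `s` and `t`, the user is assigned to one of them, namely one
whose current load does not exceed the other's. -/
def IsSPOT (k : ℕ)
    (A : (Fin (k ^ 2) → Torus k) → Fin (k ^ 2) → Fin k × Fin k) : Prop :=
  ∀ ω b s t, IsSecondNearest s t (ω b) →
    (A ω b = s ∨ A ω b = t) ∧
    ∀ v, (v = s ∨ v = t) →
      loadBefore (A ω) b (A ω b) ≤ loadBefore (A ω) b v

/-! ### Second moment method and occupancy of disjoint cells -/

/-- Chebyshev's inequality for the number of events `E s` that occur: equiprobable events with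
pairwise nonpositive correlation. It comes from integrating the pointwise inequality
`(N q)² 1_{X = 0} ≤ (X - N q)²`, where `X` counts the events that occur. -/
theorem second_moment {Ω : Type*} [MeasurableSpace Ω] (P : Measure Ω) [IsProbabilityMeasure P]
    {ι : Type*} [Fintype ι] [Nonempty ι] (E : ι → Set Ω)
    (hE : ∀ s, MeasurableSet (E s)) {q : ℝ} (hq : 0 < q) (h1 : ∀ s, P.real (E s) = q)
    (h2 : ∀ s t, s ≠ t → P.real (E s ∩ E t) ≤ q ^ 2) :
    1 - 1 / (Fintype.card ι * q) ≤ P.real (⋃ s, E s) := by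
  classical
  set N : ℝ := (Fintype.card ι : ℝ) with hN
  have hNpos : 0 < N := by rw [hN]; exact_mod_cast Fintype.card_pos
  set U := ⋃ s, E s with hU
  have hUm : MeasurableSet U := MeasurableSet.iUnion hE
  have hI : ∀ F : Set Ω, MeasurableSet F → Integrable (F.indicator (1 : Ω → ℝ)) P := fun F hF =>
    (integrable_const (1 : ℝ)).indicator hF
  have key : ∀ ω, (N * q) ^ 2 * (1 - U.indicator (1 : Ω → ℝ) ω) ≤
      (∑ s, ∑ t, (E s ∩ E t).indicator (1 : Ω → ℝ) ω)
        - 2 * (N * q) * (∑ s, (E s).indicator (1 : Ω → ℝ) ω) + (N * q) ^ 2 := by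
    intro ω
    have hsq : (∑ s, ∑ t, (E s ∩ E t).indicator (1 : Ω → ℝ) ω) =
        (∑ s, (E s).indicator (1 : Ω → ℝ) ω) ^ 2 := by
      rw [sq, Finset.sum_mul_sum]
      refine Finset.sum_congr rfl fun s _ => Finset.sum_congr rfl fun t _ => ?_
      by_cases hs : ω ∈ E s <;> by_cases ht : ω ∈ E t <;> simp [hs, ht]
    rw [hsq]
    -- On `U` the left side vanishes; off `U` no event occurs and both sides are `(N q)²`.
    by_cases h : ω ∈ U
    · rw [Set.indicator_of_mem h]
      simp only [Pi.one_apply, sub_self, mul_zero]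
      nlinarith [sq_nonneg ((∑ s, (E s).indicator (1 : Ω → ℝ) ω) - N * q)]
    · have h0 : ∑ s, (E s).indicator (1 : Ω → ℝ) ω = 0 := by
        refine Finset.sum_eq_zero fun s _ => Set.indicator_of_notMem (fun hs => h ?_) _
        exact Set.mem_iUnion.2 ⟨s, hs⟩
      rw [h0, Set.indicator_of_notMem h]
      simp
  have hint := integral_mono (μ := P) (((integrable_const (1 : ℝ)).sub (hI U hUm)).const_mul _)
    (((integrable_finsetSum _ fun s _ => integrable_finsetSum _ fun t _ =>
      hI _ ((hE s).inter (hE t))).sub ((integrable_finsetSum _ fun s _ =>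
      hI _ (hE s)).const_mul (2 * (N * q)))).add (integrable_const ((N * q) ^ 2))) key
  have hL : ∫ ω, (N * q) ^ 2 * (1 - U.indicator (1 : Ω → ℝ) ω) ∂P =
      (N * q) ^ 2 * (1 - P.real U) := by
    rw [integral_const_mul, integral_sub (integrable_const _) (hI U hUm), integral_indicator_one hUm]
    simp
  have hR : ∫ ω, ((∑ s, ∑ t, (E s ∩ E t).indicator (1 : Ω → ℝ) ω)
        - 2 * (N * q) * (∑ s, (E s).indicator (1 : Ω → ℝ) ω) + (N * q) ^ 2) ∂P =
      (∑ s, ∑ t, P.real (E s ∩ E t)) - 2 * (N * q) * (∑ s, P.real (E s)) + (N * q) ^ 2 := by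
    have i1 : ∀ s, Integrable (fun ω => ∑ t, (E s ∩ E t).indicator (1 : Ω → ℝ) ω) P := fun s =>
      integrable_finsetSum _ fun t _ => hI _ ((hE s).inter (hE t))
    have i2 : Integrable (fun ω => ∑ s, ∑ t, (E s ∩ E t).indicator (1 : Ω → ℝ) ω) P :=
      integrable_finsetSum _ fun s _ => i1 s
    have i3 : Integrable (fun ω => ∑ s, (E s).indicator (1 : Ω → ℝ) ω) P :=
      integrable_finsetSum _ fun s _ => hI _ (hE s)
    have e2 : ∫ ω, ∑ s, ∑ t, (E s ∩ E t).indicator (1 : Ω → ℝ) ω ∂P =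
        ∑ s, ∑ t, P.real (E s ∩ E t) := by
      rw [integral_finsetSum _ fun s _ => i1 s]
      refine Finset.sum_congr rfl fun s _ => ?_
      rw [integral_finsetSum _ fun t _ => hI _ ((hE s).inter (hE t))]
      exact Finset.sum_congr rfl fun t _ => integral_indicator_one ((hE s).inter (hE t))
    have e3 : ∫ ω, ∑ s, (E s).indicator (1 : Ω → ℝ) ω ∂P = ∑ s, P.real (E s) := by
      rw [integral_finsetSum _ fun s _ => hI _ (hE s)]
      exact Finset.sum_congr rfl fun s _ => integral_indicator_one (hE s)
    have i4 : Integrable (fun ω => (∑ s, ∑ t, (E s ∩ E t).indicator (1 : Ω → ℝ) ω)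
        - 2 * (N * q) * (∑ s, (E s).indicator (1 : Ω → ℝ) ω)) P := i2.sub (i3.const_mul _)
    rw [integral_add i4 (integrable_const _), integral_sub i2 (i3.const_mul _),
      integral_const_mul, e2, e3]
    simp
  have hpair : (∑ s, ∑ t, P.real (E s ∩ E t)) ≤ N * q + (N * q) ^ 2 := by
    have : ∀ s t, P.real (E s ∩ E t) ≤ (if s = t then q else 0) + q ^ 2 := by
      intro s t
      by_cases h : s = t
      · subst h; simp [h1]; positivity
      · simpa [h] using h2 s t h
    calc _ ≤ ∑ s : ι, ∑ t : ι, ((if s = t then q else 0) + q ^ 2) :=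
          Finset.sum_le_sum fun s _ => Finset.sum_le_sum fun t _ => this s t
      _ = _ := by simp [Finset.sum_add_distrib, ← hN]; ring
  have hsum : (∑ s, P.real (E s)) = N * q := by simp [h1, ← hN]
  have hfin : (N * q) ^ 2 * (1 - P.real U) ≤ N * q := by
    have h := hL ▸ hint
    have h' := h.trans_eq hR
    rw [hsum] at h'
    nlinarith
  have hNq : 0 < N * q := by positivity
  have : 1 - P.real U ≤ 1 / (N * q) := by
    rw [le_div_iff₀ hNq]
    nlinarith
  linarith

/-- Regrouping `L * m` of the `n` i.i.d. coordinates into `L` blocks of size `m` preserves the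
product measure; this encodes independence of the blocks. -/
theorem blocks {T : Type*} [MeasurableSpace T] (ν : Measure T) [IsProbabilityMeasure ν]
    {n L m : ℕ} (g : Fin L × Fin m → Fin n) (hg : g.Injective) :
    MeasurePreserving (fun (ω : Fin n → T) (j : Fin L) (i : Fin m) => ω (g (j, i)))
      (Measure.pi fun _ => ν) (Measure.pi fun _ => Measure.pi fun _ => ν) := by
  refine ⟨by fun_prop, ?_⟩
  have h1 : (Measure.pi fun _ : Fin n => ν).map (fun ω p => ω (g p)) =
      Measure.pi fun _ : Fin L × Fin m => ν := by
    have hi := (ProbabilityTheory.iIndepFun_pi (μ := fun _ : Fin n => ν)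
      (X := fun _ => (id : T → T)) (fun _ => aemeasurable_id)).precomp hg
    have := hi.map_fun_eq_pi_map (fun p => (measurable_pi_apply (g p)).aemeasurable)
    refine this.trans ?_
    congr 1
    ext1 p
    exact (measurePreserving_eval (fun _ : Fin n => ν) (g p)).map_eq
  have h2 := Measure.infinitePi_map_curry (fun (_ : Fin L) (_ : Fin m) => ν)
  simp only [Measure.infinitePi_eq_pi] at h2
  rw [← h2, ← h1, Measure.map_map (by fun_prop) (by fun_prop)]
  rfl

theorem pi_real_miss {T : Type*} [MeasurableSpace T] (ν : Measure T) [IsProbabilityMeasure ν]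
    (m : ℕ) {R : Set T} (hR : MeasurableSet R) :
    (Measure.pi fun _ : Fin m => ν).real {x | ∃ i, x i ∈ R}ᶜ = (1 - ν.real R) ^ m := by
  have : {x : Fin m → T | ∃ i, x i ∈ R}ᶜ = Set.univ.pi fun _ => Rᶜ := by
    ext x; simp [Set.mem_pi]
  rw [this, Measure.real, Measure.pi_pi, ← probReal_compl_eq_one_sub hR]
  simp [ENNReal.toReal_pow, Measure.real]

theorem measurable_hit {T : Type*} [MeasurableSpace T] (m : ℕ) {R : Set T}
    (hR : MeasurableSet R) : MeasurableSet {x : Fin m → T | ∃ i, x i ∈ R} := by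
  have : {x : Fin m → T | ∃ i, x i ∈ R} = ⋃ i, (fun x => x i) ⁻¹' R := by ext; simp
  rw [this]
  exact MeasurableSet.iUnion fun i => measurable_pi_apply i hR

theorem pi_real_hit {T : Type*} [MeasurableSpace T] (ν : Measure T) [IsProbabilityMeasure ν]
    (m : ℕ) {R : Set T} (hR : MeasurableSet R) :
    (Measure.pi fun _ : Fin m => ν).real {x | ∃ i, x i ∈ R} = 1 - (1 - ν.real R) ^ m := by
  have := probReal_compl_eq_one_sub (μ := Measure.pi fun _ : Fin m => ν) (measurable_hit m hR)
  rw [pi_real_miss ν m hR] at this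
  linarith

/-- Hitting two disjoint sets with the same `m` samples is negatively correlated: by
inclusion–exclusion this reduces to `1 - a - b ≤ (1 - a) (1 - b)`. -/
theorem pi_real_hit_both {T : Type*} [MeasurableSpace T] (ν : Measure T) [IsProbabilityMeasure ν]
    (m : ℕ) {R S : Set T} (hR : MeasurableSet R) (hS : MeasurableSet S) (hRS : Disjoint R S) :
    (Measure.pi fun _ : Fin m => ν).real ({x | ∃ i, x i ∈ R} ∩ {x | ∃ i, x i ∈ S}) ≤
      (1 - (1 - ν.real R) ^ m) * (1 - (1 - ν.real S) ^ m) := by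
  have hu : {x : Fin m → T | ∃ i, x i ∈ R} ∪ {x | ∃ i, x i ∈ S} = {x | ∃ i, x i ∈ R ∪ S} := by
    ext x; simp [exists_or]
  have h := measureReal_union_add_inter (μ := Measure.pi fun _ : Fin m => ν)
    (s := {x : Fin m → T | ∃ i, x i ∈ R}) (measurable_hit m hS)
  rw [hu, pi_real_hit ν m (hR.union hS), pi_real_hit ν m hR, pi_real_hit ν m hS,
    measureReal_union hRS hS] at h
  have hle : ν.real R + ν.real S ≤ 1 := by
    rw [← measureReal_union hRS hS]; exact measureReal_le_one
  have hp : (1 - (ν.real R + ν.real S)) ^ m ≤ ((1 - ν.real R) * (1 - ν.real S)) ^ m := by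
    refine pow_le_pow_left₀ (by linarith) ?_ m
    nlinarith [mul_nonneg (measureReal_nonneg (μ := ν) (s := R))
      (measureReal_nonneg (μ := ν) (s := S))]
  rw [mul_pow] at hp
  nlinarith

/-- With the samples cut into `L` blocks of size `m`, some cell is hit by every block, except with
probability at most the inverse of the expected number of such cells. -/
theorem repeated_cell {T : Type*} [MeasurableSpace T] (ν : Measure T) [IsProbabilityMeasure ν]
    {ι : Type*} [Fintype ι] [Nonempty ι] (R : ι → Set T) (hR : ∀ s, MeasurableSet (R s))
    (hd : ∀ s t, s ≠ t → Disjoint (R s) (R t)) {p : ℝ} (hp : ∀ s, ν.real (R s) = p)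
    {n L m : ℕ} (g : Fin L × Fin m → Fin n) (hg : g.Injective)
    (hpos : 0 < 1 - (1 - p) ^ m) :
    1 - 1 / (Fintype.card ι * (1 - (1 - p) ^ m) ^ L) ≤
      (Measure.pi fun _ : Fin n => ν).real {ω | ∃ s, ∀ j, ∃ i, ω (g (j, i)) ∈ R s} := by
  set H : ι → Set (Fin m → T) := fun s => {x | ∃ i, x i ∈ R s} with hH
  set E : ι → Set (Fin L → Fin m → T) := fun s => Set.univ.pi fun _ => H s with hE
  have hHm : ∀ s, MeasurableSet (H s) := fun s => measurable_hit m (hR s)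
  have hEm : ∀ s, MeasurableSet (E s) := fun s => MeasurableSet.univ_pi fun _ => hHm s
  have key := second_moment (Measure.pi fun _ : Fin L => Measure.pi fun _ : Fin m => ν) E hEm
    (q := (1 - (1 - p) ^ m) ^ L) (pow_pos hpos L)
    (fun s => by
      rw [hE, Measure.real, Measure.pi_pi]
      have := pi_real_hit ν m (hR s)
      rw [hp s, Measure.real] at this
      simp [ENNReal.toReal_pow, hH, this])
    (fun s t hst => by
      rw [hE, ← Set.pi_inter_distrib, Measure.real, Measure.pi_pi]
      have := pi_real_hit_both ν m (hR s) (hR t) (hd s t hst)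
      rw [hp s, hp t, Measure.real] at this
      simp only [Finset.prod_const, Finset.card_univ, Fintype.card_fin, ENNReal.toReal_pow, hH]
      rw [← pow_mul, mul_comm L 2, pow_mul]
      exact pow_le_pow_left₀ ENNReal.toReal_nonneg (this.trans_eq (sq _).symm) L)
  rw [← (blocks ν g hg).measureReal_preimage (MeasurableSet.iUnion hEm).nullMeasurableSet] at key
  refine key.trans_eq (congrArg _ ?_)
  ext ω
  simp [hE, hH, Set.mem_pi]

/-! ### Nearest and second-nearest servers on the torus -/

/-- Every point of the circle has a real representative whose absolute value is its norm. -/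
theorem circle_lift {k : ℕ} (z : AddCircle (k : ℝ)) :
    ∃ y : ℝ, (y : AddCircle (k : ℝ)) = z ∧ |y| = ‖z‖ := by
  induction z using QuotientAddGroup.induction_on with
  | H x =>
    refine ⟨x - round ((k : ℝ)⁻¹ * x) * k, ?_, (AddCircle.norm_eq (k : ℝ)).symm⟩
    have : ((round ((k : ℝ)⁻¹ * x) * k : ℝ) : AddCircle (k : ℝ)) = 0 :=
      AddCircle.coe_eq_zero_iff _ |>.2 ⟨round ((k : ℝ)⁻¹ * x), by simp⟩
    rw [AddCircle.coe_sub, this, sub_zero]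

/-- If `z` has offset `a` from the grid point `i`, its distance to the grid point `t` is `|a + m|`
for some integer `m` congruent to `i - t` modulo `k`. -/
theorem circle_dist {k : ℕ} (i t : Fin k) (a : ℝ) (z : AddCircle (k : ℝ))
    (h : z - ((i : ℝ) : AddCircle (k : ℝ)) = (a : AddCircle (k : ℝ))) :
    ∃ m : ℤ, dist z ((t : ℝ) : AddCircle (k : ℝ)) = |a + m| ∧ (k : ℤ) ∣ m - (i - t) := by
  obtain ⟨y, hy, hn⟩ := circle_lift (z - ((t : ℝ) : AddCircle (k : ℝ)))
  have h0 : ((y - (a + i - t) : ℝ) : AddCircle (k : ℝ)) = 0 := by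
    simp only [AddCircle.coe_sub, AddCircle.coe_add, hy, ← h]
    abel
  obtain ⟨l, hl⟩ := (AddCircle.coe_eq_zero_iff _).1 h0
  refine ⟨i - t + l * k, ?_, ⟨l, by ring⟩⟩
  rw [dist_eq_norm, ← hn]
  congr 1
  push_cast
  simp only [zsmul_eq_mul] at hl
  linarith

theorem circle_dist_le {k : ℕ} (i t : Fin k) (a : ℝ) (z : AddCircle (k : ℝ))
    (h : z - ((i : ℝ) : AddCircle (k : ℝ)) = (a : AddCircle (k : ℝ))) (m : ℤ)
    (hm : (k : ℤ) ∣ m - (i - t)) :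
    dist z ((t : ℝ) : AddCircle (k : ℝ)) ≤ |a + m| := by
  obtain ⟨l, hl⟩ := hm
  have h0 : ((l * k : ℝ) : AddCircle (k : ℝ)) = 0 :=
    (AddCircle.coe_eq_zero_iff _).2 ⟨l, by simp⟩
  have : z - ((t : ℝ) : AddCircle (k : ℝ)) = ((a + m : ℝ) : AddCircle (k : ℝ)) := by
    have hm : (m : ℝ) = i - t + l * k := by
      have : (m : ℤ) = i - t + l * k := by linarith
      exact_mod_cast this
    rw [hm]
    simp only [AddCircle.coe_sub, AddCircle.coe_add, h0, ← h]
    abel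
  rw [dist_eq_norm, this]
  exact QuotientAddGroup.norm_mk_le_norm

theorem fin_eq_of_dvd {k : ℕ} {i t : Fin k} (h : (k : ℤ) ∣ 0 - ((i : ℤ) - t)) : t = i := by
  have hi := i.2
  have ht := t.2
  have := Int.eq_zero_of_abs_lt_dvd h (by rw [abs_lt]; omega)
  ext; omega

/-- The box of points with horizontal offset in `[5/16, 7/16]` and vertical offset in
`[-1/4, 1/4]` from the server `s`. The horizontal offset always exceeds the vertical one, so the
right neighbor of `s` is strictly closer than the upper and lower ones. -/
noncomputable def cell {k : ℕ} (s : Fin k × Fin k) : Set (Torus k) :=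
  Metric.closedBall (((s.1 : ℝ) + 3 / 8 : ℝ) : AddCircle (k : ℝ)) (1 / 16) ×ˢ
    Metric.closedBall ((s.2 : ℝ) : AddCircle (k : ℝ)) (1 / 4)

theorem abs_add_int_cases {a : ℝ} (h1 : 5 / 16 ≤ a) (h2 : a ≤ 7 / 16) (m : ℤ) :
    m = 0 ∨ m = -1 ∨ 1 ≤ |a + m| := by
  rcases lt_trichotomy m 0 with h | h | h
  · by_cases hm : m = -1
    · exact Or.inr (Or.inl hm)
    · have : (m : ℝ) ≤ -2 := by exact_mod_cast (by omega : m ≤ -2)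
      exact Or.inr (Or.inr (le_trans (by linarith) (neg_le_abs _)))
  · exact Or.inl h
  · right; right
    have : (1 : ℝ) ≤ m := by exact_mod_cast h
    exact le_trans (by linarith) (le_abs_self _)

theorem abs_add_int_ge {b : ℝ} (hb : |b| ≤ 1 / 4) {m : ℤ} (hm : m ≠ 0) : 3 / 4 ≤ |b + m| := by
  obtain ⟨h1, h2⟩ := abs_le.1 hb
  rcases lt_or_gt_of_ne hm with h | h
  · have : (m : ℝ) ≤ -1 := by exact_mod_cast (by omega : m ≤ -1)
    exact le_trans (by linarith) (neg_le_abs _)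
  · have : (1 : ℝ) ≤ m := by exact_mod_cast h
    exact le_trans (by linarith) (le_abs_self _)

theorem dvd_right_neighbor {k : ℕ} [NeZero k] (i : Fin k) :
    (k : ℤ) ∣ -1 - ((i : ℤ) - (i + 1 : Fin k)) := by
  rw [Fin.val_add, Fin.val_one', Nat.add_mod_mod]
  push_cast
  have := Int.emod_add_mul_ediv ((i : ℤ) + 1) k
  exact ⟨-(((i : ℤ) + 1) / k), by linarith⟩

theorem cell_second_nearest {k : ℕ} [NeZero k] (hk : 2 ≤ k) {s : Fin k × Fin k} {r : Torus k}
    (hr : r ∈ cell s) : IsSecondNearest s (s.1 + 1, s.2) r := by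
  obtain ⟨hr1, hr2⟩ := hr
  rw [Metric.mem_closedBall, dist_eq_norm] at hr1 hr2
  obtain ⟨y, hy, hyn⟩ := circle_lift (r.1 - (((s.1 : ℝ) + 3 / 8 : ℝ) : AddCircle (k : ℝ)))
  obtain ⟨b, hb, hbn⟩ := circle_lift (r.2 - ((s.2 : ℝ) : AddCircle (k : ℝ)))
  rw [← hyn] at hr1
  rw [← hbn] at hr2
  obtain ⟨a, ha⟩ : ∃ a, a = 3 / 8 + y := ⟨_, rfl⟩
  obtain ⟨hy1, hy2⟩ := abs_le.1 hr1
  have ha1 : 5 / 16 ≤ a := by linarith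
  have ha2 : a ≤ 7 / 16 := by linarith
  have hra : r.1 - ((s.1 : ℝ) : AddCircle (k : ℝ)) = (a : AddCircle (k : ℝ)) := by
    rw [ha, AddCircle.coe_add, hy, AddCircle.coe_add]
    abel
  have hx0 : dist r.1 ((s.1 : ℝ) : AddCircle (k : ℝ)) ≤ a := by
    have := circle_dist_le s.1 s.1 a r.1 hra 0 (by simp)
    rwa [Int.cast_zero, add_zero, abs_of_nonneg (by linarith)] at this
  have hx1 : dist r.1 (((s.1 + 1 : Fin k) : ℝ) : AddCircle (k : ℝ)) ≤ 1 - a := by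
    have := circle_dist_le s.1 (s.1 + 1) a r.1 hra (-1) (dvd_right_neighbor s.1)
    rwa [Int.cast_neg, Int.cast_one, abs_of_nonpos (by linarith), neg_add', sub_neg_eq_add,
      neg_add_eq_sub] at this
  have hy0 : dist r.2 ((s.2 : ℝ) : AddCircle (k : ℝ)) = |b| := by rw [dist_eq_norm, hbn]
  have hX : ∀ u : Fin k, (u = s.1 ∧ a ≤ dist r.1 ((u : ℝ) : AddCircle (k : ℝ))) ∨
      (u = s.1 + 1 ∧ 1 - a ≤ dist r.1 ((u : ℝ) : AddCircle (k : ℝ))) ∨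
      1 ≤ dist r.1 ((u : ℝ) : AddCircle (k : ℝ)) := by
    intro u
    obtain ⟨m, hm, hdvd⟩ := circle_dist s.1 u a r.1 hra
    rw [hm]
    rcases abs_add_int_cases ha1 ha2 m with rfl | rfl | h
    · exact Or.inl ⟨fin_eq_of_dvd hdvd, by simpa using le_abs_self a⟩
    · refine Or.inr (Or.inl ⟨?_, ?_⟩)
      · refine fin_eq_of_dvd ?_
        obtain ⟨l, hl⟩ := hdvd
        obtain ⟨l', hl'⟩ := dvd_right_neighbor s.1
        exact ⟨l - l', by linarith⟩
      · exact le_trans (by push_cast; linarith) (neg_le_abs _)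
    · exact Or.inr (Or.inr h)
  have hY : ∀ u : Fin k, u ≠ s.2 → 3 / 4 ≤ dist r.2 ((u : ℝ) : AddCircle (k : ℝ)) := by
    intro u hu
    obtain ⟨m, hm, hdvd⟩ := circle_dist s.2 u b r.2 hb.symm
    rw [hm]
    refine abs_add_int_ge hr2 ?_
    rintro rfl
    exact hu (fin_eq_of_dvd hdvd)
  have hY' : ∀ u : Fin k, |b| ≤ dist r.2 ((u : ℝ) : AddCircle (k : ℝ)) := by
    intro u
    by_cases hu : u = s.2
    · rw [hu, hy0]
    · linarith [hY u hu]
  have hb0 : 0 ≤ |b| := abs_nonneg b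
  have hne : s.1 + 1 ≠ s.1 := by
    intro h
    have h1 : (1 : Fin k) = 0 := by simpa using h
    have := congrArg Fin.val h1
    rw [Fin.val_one', Nat.mod_eq_of_lt (by omega)] at this
    simp at this
  have hst : torusDist r (server s) < torusDist r (server (s.1 + 1, s.2)) := by
    refine Real.sqrt_lt_sqrt (by positivity) ?_
    simp only [server]
    have h1 : 1 - a ≤ dist r.1 (((s.1 + 1 : Fin k) : ℝ) : AddCircle (k : ℝ)) := by
      rcases hX (s.1 + 1) with ⟨h, -⟩ | ⟨-, h⟩ | h
      · exact absurd h hne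
      · exact h
      · linarith
    have h0 := dist_nonneg (x := r.1) (y := ((s.1 : ℝ) : AddCircle (k : ℝ)))
    nlinarith
  have htu : ∀ u, u ≠ s → u ≠ (s.1 + 1, s.2) →
      torusDist r (server (s.1 + 1, s.2)) < torusDist r (server u) := by
    intro u hus hut
    refine Real.sqrt_lt_sqrt (by positivity) ?_
    simp only [server]
    have h0 := dist_nonneg (x := r.1) (y := (((s.1 + 1 : Fin k) : ℝ) : AddCircle (k : ℝ)))
    rw [hy0]
    have hyu := hY' u.2
    by_cases h2 : u.2 = s.2
    · have hxu : 1 ≤ dist r.1 ((u.1 : ℝ) : AddCircle (k : ℝ)) := by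
        rcases hX u.1 with ⟨h, -⟩ | ⟨h, -⟩ | h
        · exact absurd (Prod.ext h h2) hus
        · exact absurd (Prod.ext (y := (s.1 + 1, s.2)) h h2) hut
        · exact h
      nlinarith
    · have hxu : a ≤ dist r.1 ((u.1 : ℝ) : AddCircle (k : ℝ)) := by
        rcases hX u.1 with ⟨-, h⟩ | ⟨-, h⟩ | h <;> linarith
      have hyu := hY u.2 h2
      have e1 : dist r.1 (((s.1 + 1 : Fin k) : ℝ) : AddCircle (k : ℝ)) ^ 2 ≤ (1 - a) ^ 2 :=
        pow_le_pow_left₀ h0 hx1 2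
      have e2 : a ^ 2 ≤ dist r.1 ((u.1 : ℝ) : AddCircle (k : ℝ)) ^ 2 :=
        pow_le_pow_left₀ (by linarith) hxu 2
      have e3 : (3 / 4 : ℝ) ^ 2 ≤ dist r.2 ((u.2 : ℝ) : AddCircle (k : ℝ)) ^ 2 :=
        pow_le_pow_left₀ (by norm_num) hyu 2
      have e4 : |b| ^ 2 ≤ (1 / 4) ^ 2 := pow_le_pow_left₀ hb0 hr2 2
      nlinarith
  refine ⟨fun u hu => ?_, fun h => hne (congrArg Prod.fst h), htu⟩
  by_cases hut : u = (s.1 + 1, s.2)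
  · rw [hut]; exact hst
  · exact hst.trans (htu u hu hut)

theorem cell_disjoint {k : ℕ} [NeZero k] (hk : 2 ≤ k) {s t : Fin k × Fin k} (hst : s ≠ t) :
    Disjoint (cell s) (cell t) :=
  Set.disjoint_left.2 fun _ hs ht => lt_asymm
    ((cell_second_nearest hk hs).1 t hst.symm) ((cell_second_nearest hk ht).1 s hst)

theorem measurableSet_cell {k : ℕ} (s : Fin k × Fin k) : MeasurableSet (cell s) :=
  Metric.isClosed_closedBall.measurableSet.prod Metric.isClosed_closedBall.measurableSet

theorem volume_cell {k : ℕ} [Fact (0 < (k : ℝ))] (s : Fin k × Fin k) :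
    μT k (cell s) = ENNReal.ofReal (1 / 16) := by
  have hk : (1 : ℝ) ≤ k := by
    have : 0 < k := by exact_mod_cast (Fact.out : 0 < (k : ℝ))
    exact_mod_cast this
  rw [μT, cell, Measure.prod_prod, AddCircle.volume_closedBall, AddCircle.volume_closedBall,
    min_eq_right (by linarith), min_eq_right (by linarith), ← ENNReal.ofReal_mul (by norm_num)]
  norm_num

theorem volume_torus {k : ℕ} [Fact (0 < (k : ℝ))] :
    μT k Set.univ = ENNReal.ofReal (k ^ 2) := by
  rw [μT, ← Set.univ_prod_univ, Measure.prod_prod, AddCircle.measure_univ, sq, ENNReal.ofReal_mul (Nat.cast_nonneg k)]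

/-! ### Repeated pairs force a high load -/

theorem maxLoad_ge_of_pair {n : ℕ} {V : Type*} [Fintype V] [DecidableEq V] (alloc : Fin n → V)
    (s t : V) (B : Finset (Fin n)) (hB : ∀ b ∈ B, alloc b = s ∨ alloc b = t) :
    B.card ≤ 2 * maxLoad alloc := by
  have h1 : load alloc s ≤ maxLoad alloc := Finset.le_sup (f := load alloc) (Finset.mem_univ s)
  have h2 : load alloc t ≤ maxLoad alloc := Finset.le_sup (f := load alloc) (Finset.mem_univ t)
  have h3 : B.card ≤ load alloc s + load alloc t := by
    refine (Finset.card_le_card fun b hb => ?_).trans (Finset.card_union_le _ _)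
    simpa [Finset.mem_union] using hB b hb
  omega

theorem maxLoad_ge_of_repeated_cell {k L m : ℕ} [NeZero k] (hk : 2 ≤ k)
    {A : (Fin (k ^ 2) → Torus k) → Fin (k ^ 2) → Fin k × Fin k} (hA : IsSPOT k A)
    (g : Fin L × Fin m → Fin (k ^ 2)) (hg : g.Injective) {ω : Fin (k ^ 2) → Torus k}
    (h : ∃ s, ∀ j, ∃ i, ω (g (j, i)) ∈ cell s) : L ≤ 2 * maxLoad (A ω) := by
  obtain ⟨s, hs⟩ := h
  choose f hf using hs
  have hinj : Function.Injective fun j => g (j, f j) := fun i j hij => congrArg Prod.fst (hg hij)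
  have := maxLoad_ge_of_pair (A ω) s (s.1 + 1, s.2)
    (Finset.univ.image fun j => g (j, f j)) (by
      intro b hb
      obtain ⟨j, -, rfl⟩ := Finset.mem_image.1 hb
      exact (hA ω _ s _ (cell_second_nearest hk (hf j))).1)
  rwa [Finset.card_image_of_injective _ hinj, Finset.card_univ, Fintype.card_fin] at this

/-! ### Choice of parameters and normalization -/

theorem one_sub_one_sub_pow_ge {p : ℝ} (h0 : 0 ≤ p) (h1 : p ≤ 1) (m : ℕ) (hm : m * p ≤ 1) :
    m * p / 2 ≤ 1 - (1 - p) ^ m := by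
  have hB : 1 + (m : ℝ) * p ≤ (1 + p) ^ m := one_add_mul_le_pow (by linarith) m
  have hq : 0 ≤ (1 - p) ^ m := pow_nonneg (by linarith) m
  have h2 : (1 - p) ^ m * (1 + p) ^ m ≤ 1 := by
    rw [← mul_pow]
    exact pow_le_one₀ (mul_nonneg (by linarith) (by linarith)) (by nlinarith)
  have h3 : (1 - p) ^ m * (1 + m * p) ≤ 1 := (mul_le_mul_of_nonneg_left hB hq).trans h2
  have h4 : 0 ≤ (m : ℝ) * p := by positivity
  nlinarith

open Real Filter in
/-- The inequalities on `x = log n` under which `L = ⌈x / (4 log x)⌉` satisfies `64 L ≤ x` and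
`L log x ≤ x / 2`. -/
theorem eventually_params : ∀ᶠ x : ℝ in atTop, 128 ≤ x ∧ 64 ≤ log x ∧ log x ≤ x / 4 := by
  refine (eventually_ge_atTop 128).and ((tendsto_log_atTop.eventually_ge_atTop 64).and ?_)
  have := isLittleO_log_id_atTop.bound (by norm_num : (0 : ℝ) < 1 / 4)
  filter_upwards [this, eventually_ge_atTop 0] with x hx h0
  simp only [norm_eq_abs, id, abs_of_nonneg h0] at hx
  linarith [le_abs_self (log x)]

/-- The product of the unnormalized torus measures is the product of its normalizations, up to
the total mass. -/
theorem pi_torus_eq (k n : ℕ) [Fact (0 < (k : ℝ))] :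
    (Measure.pi fun _ : Fin n => μT k) =
      (μT k Set.univ) ^ n • Measure.pi fun _ : Fin n => (μT k Set.univ)⁻¹ • μT k := by
  have hk : (0 : ℝ) < k := Fact.out
  have : IsFiniteMeasure (μT k) := ⟨by rw [volume_torus]; exact ENNReal.ofReal_lt_top⟩
  have hc0 : μT k Set.univ ≠ 0 := by
    rw [volume_torus]; simpa using hk.ne'
  have : IsProbabilityMeasure ((μT k Set.univ)⁻¹ • μT k) :=
    ⟨by simp [ENNReal.inv_mul_cancel hc0 (measure_ne_top _ _)]⟩
  refine Measure.pi_eq fun s _ => ?_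
  rw [Measure.smul_apply, Measure.pi_pi]
  simp only [Measure.smul_apply, smul_eq_mul, Finset.prod_mul_distrib, Finset.prod_const,
    Finset.card_univ, Fintype.card_fin]
  rw [← mul_assoc, ← mul_pow, ENNReal.mul_inv_cancel hc0 (measure_ne_top _ _), one_pow, one_mul]

open Real in
theorem sPOT_grid_lower_bound :
    ∃ c > (0:ℝ), ∃ K : ℕ, ∀ k ≥ K, ∀ _ : NeZero k, ∀ _ : Fact (0 < (k : ℝ)),
      ∀ A : (Fin (k ^ 2) → Torus k) → Fin (k ^ 2) → Fin k × Fin k, IsSPOT k A →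
      (Measure.pi fun _ : Fin (k ^ 2) => μT k)
          {ω | c * (log (k ^ 2) / log (log (k ^ 2))) ≤ (maxLoad (A ω) : ℝ)}
        ≥ ENNReal.ofReal (1 - ((k : ℝ) ^ 2) ^ (-c)) *
          (Measure.pi fun _ : Fin (k ^ 2) => μT k) Set.univ := by
  refine ⟨1 / 8, by norm_num, ?_⟩
  have hx_tendsto : Filter.Tendsto (fun k : ℕ => log ((k : ℝ) ^ 2)) Filter.atTop Filter.atTop :=
    tendsto_log_atTop.comp
      ((Filter.tendsto_pow_atTop two_ne_zero).comp tendsto_natCast_atTop_atTop)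
  obtain ⟨K, hK⟩ := Filter.eventually_atTop.1
    ((hx_tendsto.eventually eventually_params).and (Filter.eventually_ge_atTop 2))
  refine ⟨K, fun k hkK _ hkpos A hA => ?_⟩
  obtain ⟨⟨hx128, hlog64, hlogx⟩, hk2⟩ := hK k hkK
  set x := log ((k : ℝ) ^ 2) with hx
  have hk0 : (0 : ℝ) < k := hkpos.out
  have hn0 : (0 : ℝ) < (k : ℝ) ^ 2 := by positivity
  have hexp : exp x = (k : ℝ) ^ 2 := exp_log hn0
  have hxn : x ≤ (k : ℝ) ^ 2 := by rw [← hexp]; linarith [add_one_le_exp x]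
  obtain ⟨L, hL⟩ : ∃ L : ℕ, L = ⌈x / (4 * log x)⌉₊ := ⟨_, rfl⟩
  have hlogpos : 0 < log x := by linarith
  have hL_ge : x / (4 * log x) ≤ L := by rw [hL]; exact Nat.le_ceil _
  have hL_lt : (L : ℝ) < x / (4 * log x) + 1 := by
    rw [hL]; exact Nat.ceil_lt_add_one (by positivity)
  have hLpos : (0 : ℝ) < L := lt_of_lt_of_le (by positivity) hL_ge
  have hL64 : 64 * (L : ℝ) ≤ x := by
    have : x / (4 * log x) ≤ x / 256 := by
      gcongr
      linarith
    linarith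
  have hLlog : L * log x ≤ x / 2 := by
    have h1 : L * log x ≤ (x / (4 * log x) + 1) * log x := by gcongr
    have h2 : (x / (4 * log x) + 1) * log x = x / 4 + log x := by field_simp
    linarith
  have hLnat : 0 < L := by exact_mod_cast hLpos
  obtain ⟨m, hm⟩ : ∃ m : ℕ, m = k ^ 2 / L := ⟨_, rfl⟩
  have hLm : L * m ≤ k ^ 2 := by rw [hm]; exact Nat.mul_div_le _ _
  -- `m + 1 > k² / L`, and rounding costs at most a factor `2` since `2 L ≤ k²`.
  have hm_ge : (k : ℝ) ^ 2 ≤ 2 * L * m := by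
    have h1 : k ^ 2 < L * (m + 1) := by rw [hm]; exact Nat.lt_mul_div_succ _ hLnat
    have h2 : (k : ℝ) ^ 2 < L * (m + 1) := by exact_mod_cast h1
    nlinarith
  have hm_le : (m : ℝ) ≤ (k : ℝ) ^ 2 := by
    have : m ≤ k ^ 2 := by rw [hm]; exact Nat.div_le_self _ _
    exact_mod_cast this
  obtain ⟨g, hg⟩ : ∃ g : Fin L × Fin m → Fin (k ^ 2), g.Injective :=
    ⟨fun q => Fin.castLE hLm (finProdFinEquiv q),
      (Fin.castLE_injective hLm).comp finProdFinEquiv.injective⟩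
  have hc0 : μT k Set.univ ≠ 0 := by
    rw [volume_torus]; simpa using hk0.ne'
  have hctop : μT k Set.univ ≠ ⊤ := by rw [volume_torus]; exact ENNReal.ofReal_ne_top
  obtain ⟨ν, hν⟩ : ∃ ν, ν = (μT k Set.univ)⁻¹ • μT k := ⟨_, rfl⟩
  have hνp : IsProbabilityMeasure ν :=
    ⟨by rw [hν]; simp [ENNReal.inv_mul_cancel hc0 hctop]⟩
  obtain ⟨p, hp⟩ : ∃ p : ℝ, p = 1 / 16 / (k : ℝ) ^ 2 := ⟨_, rfl⟩
  have hcell : ∀ s : Fin k × Fin k, ν.real (cell s) = p := by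
    intro s
    rw [hν, Measure.real, Measure.smul_apply, volume_cell, volume_torus, smul_eq_mul,
      ENNReal.toReal_mul, ENNReal.toReal_inv, ENNReal.toReal_ofReal hn0.le,
      ENNReal.toReal_ofReal (by norm_num), hp]
    ring
  have hp0 : 0 ≤ p := by rw [hp]; positivity
  have hp1 : p ≤ 1 := by
    rw [hp, div_le_one hn0]; linarith
  have hpn : p * (k : ℝ) ^ 2 = 1 / 16 := by rw [hp]; field_simp
  have hmp : m * p ≤ 1 := by nlinarith
  -- A block hits a given cell with probability at least `m p / 2 ≥ 1 / (64 L) ≥ 1 / x`.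
  have hhit : 1 / x ≤ 1 - (1 - p) ^ m := by
    refine le_trans ?_ (one_sub_one_sub_pow_ge hp0 hp1 m hmp)
    have h1 : 1 / 32 ≤ L * (m * p) := by nlinarith
    have h2 : 0 ≤ m * p := by positivity
    rw [div_le_iff₀ (by linarith)]
    nlinarith
  have hhit0 : 0 < 1 - (1 - p) ^ m := lt_of_lt_of_le (by positivity) hhit
  have hpow : exp (-(x / 2)) ≤ (1 - (1 - p) ^ m) ^ L := by
    calc exp (-(x / 2)) ≤ exp (L * -log x) := exp_le_exp.2 (by linarith)
      _ = (1 / x) ^ L := by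
        rw [exp_nat_mul, exp_neg, exp_log (by linarith), one_div]
      _ ≤ _ := pow_le_pow_left₀ (by positivity) hhit L
  have hcard : (Fintype.card (Fin k × Fin k) : ℝ) = exp x := by
    rw [hexp]; simp [sq]
  have hprob := repeated_cell ν cell measurableSet_cell (fun s t => cell_disjoint hk2) hcell g hg
    hhit0
  rw [hcard] at hprob
  have herr : 1 / (exp x * (1 - (1 - p) ^ m) ^ L) ≤ ((k : ℝ) ^ 2) ^ (-(1 / 8) : ℝ) := by
    have h1 : exp (x / 2) ≤ exp x * (1 - (1 - p) ^ m) ^ L := by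
      calc exp (x / 2) = exp x * exp (-(x / 2)) := by rw [← exp_add]; congr 1; ring
        _ ≤ _ := by gcongr
    calc _ ≤ 1 / exp (x / 2) := one_div_le_one_div_of_le (exp_pos _) h1
      _ = exp (-(x / 2)) := by rw [exp_neg, one_div]
      _ ≤ exp (x * -(1 / 8)) := exp_le_exp.2 (by linarith)
      _ = _ := by rw [rpow_def_of_pos hn0]
  have hsub : {ω : Fin (k ^ 2) → Torus k | ∃ s, ∀ j, ∃ i, ω (g (j, i)) ∈ cell s} ⊆
      {ω | 1 / 8 * (x / log x) ≤ (maxLoad (A ω) : ℝ)} := by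
    intro ω hω
    have h1 : (L : ℝ) ≤ 2 * maxLoad (A ω) := by
      exact_mod_cast maxLoad_ge_of_repeated_cell hk2 hA g hg hω
    have h2 : x / (4 * log x) = 2 * (1 / 8 * (x / log x)) := by field_simp; norm_num
    simp only [Set.mem_ofPred_eq]
    linarith
  rw [pi_torus_eq, ← hν]
  simp only [Measure.smul_apply, smul_eq_mul, measure_univ, mul_one, ge_iff_le]
  rw [mul_comm]
  gcongr
  refine le_trans ?_ (measure_mono hsub)
  rw [ENNReal.ofReal_le_iff_le_toReal (measure_ne_top _ _)]
  exact le_trans (by linarith) hprob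
end

section
/- The number of nonempty cells of the second-order Voronoi diagram of n points in general position in the plane is O(n); specifically it is at most 3n (up to constants). -/
/-!
A cell of `{a, b}` is nonempty exactly when some disk contains `a`, `b` and no other point of `S`.
Shrinking the disk makes `a` and `b` lie on its boundary, so the pair `{a, b}` is a Delaunay edge:
there is an affine perturbation `F` of `q = ‖·‖²` which vanishes at `a`, `b` and is positive on
the rest of `S` (`exists_power_function`). It remains to bound the number of Delaunay edges
by `3 * n`, which is done without Euler's formula.

Choose coordinates `X`, `Y` with `X` injective on `S`. Every edge `ab` with `X a < X b` has a
Delaunay triangle `abc` directly above it, or no point of `S` above its line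
(`exists_edge_label`). Label the edge by the vertex of that triangle whose `X`-coordinate is in the
middle, together with the position of the edge relative to this vertex (the edge opposite to it,
the edge to its left, or the edge to its right); if there is no triangle, label it as a left edge
of `b`. This labelling with `3 * n` labels is injective (`edge_label_unique`): two Delaunay
triangles having the same middle vertex `m` and both crossed by the upward (or both by the downward)
vertical ray at `m` coincide (`triangle_unique`). Indeed, the difference of their two functions `F`
is affine, vanishes at `m`, is nonpositive on one triangle and nonnegative on the other;
since the triangles overlap near `m`, it is zero.
-/

/-- The (open) cell of the second-order Voronoi diagram of the point set `S`
associated with the unordered pair `{a, b}`: the locus of points whose two nearest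
points of `S` are `a` and `b`. -/
def SecondOrderCell (S : Finset (EuclideanSpace ℝ (Fin 2)))
    (a b : EuclideanSpace ℝ (Fin 2)) : Set (EuclideanSpace ℝ (Fin 2)) :=
  {x | ∀ s ∈ S, s ≠ a → s ≠ b → max (dist x a) (dist x b) < dist x s}

/-- Four points are cocircular if they lie on a common circle. -/
def Cocircular (a b c d : EuclideanSpace ℝ (Fin 2)) : Prop :=
  ∃ (z : EuclideanSpace ℝ (Fin 2)) (ρ : ℝ),
    dist a z = ρ ∧ dist b z = ρ ∧ dist c z = ρ ∧ dist d z = ρ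

namespace VoronoiAux

variable {V : Type*}

/-! ### Delaunay edges, triangles and labels -/

/-- Twice the signed area of the triangle `abc` in the coordinates `X`, `Y`; for `X a < X b` it is
positive exactly when `c` lies above the line `ab`. -/
def area (X Y : V → ℝ) (a b c : V) : ℝ :=
  (X b - X a) * (Y c - Y a) - (Y b - Y a) * (X c - X a)

/-- `a` and `b` span a Delaunay edge (for the lifting function `q`): some `q + affine` vanishes
at both and is positive at all other points of `S`. -/
def IsEdge (S : Finset V) (X Y q : V → ℝ) (a b : V) : Prop :=
  ∃ A B C : ℝ, q a + A + B * X a + C * Y a = 0 ∧ q b + A + B * X b + C * Y b = 0 ∧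
    ∀ s ∈ S, s ≠ a → s ≠ b → 0 < q s + A + B * X s + C * Y s

/-- `a`, `b`, `c` lie on the boundary of a disk with no point of `S` in its interior (for the
lifting function `q`). -/
def IsTri (S : Finset V) (X Y q : V → ℝ) (a b c : V) : Prop :=
  ∃ A B C : ℝ, q a + A + B * X a + C * Y a = 0 ∧ q b + A + B * X b + C * Y b = 0 ∧
    q c + A + B * X c + C * Y c = 0 ∧ ∀ s ∈ S, 0 ≤ q s + A + B * X s + C * Y s

/-- General position with respect to the lifting function `q`: no four distinct points of `S`
are zeros of the same `q + affine`. -/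
def NoFour (S : Finset V) (X Y q : V → ℝ) : Prop :=
  ∀ A B C : ℝ, ∀ a ∈ S, ∀ b ∈ S, ∀ c ∈ S, ∀ d ∈ S,
    a ≠ b → a ≠ c → a ≠ d → b ≠ c → b ≠ d → c ≠ d →
    q a + A + B * X a + C * Y a = 0 → q b + A + B * X b + C * Y b = 0 →
    q c + A + B * X c + C * Y c = 0 → q d + A + B * X d + C * Y d = 0 → False

/-- The relation between an edge `ab` (with `X a < X b`) and its label `(m, i)`: `m` is the middle
vertex of the Delaunay triangle above `ab`, and `i = 0, 1, 2` means that `ab` is opposite to `m`,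
to the left of `m`, or to the right of `m`. If no point of `S` is above the line `ab`,
the label is `(b, 1)`. -/
def Label (S : Finset V) (X Y q : V → ℝ) (a b m : V) (i : Fin 3) : Prop :=
  (i = 0 ∧ X a < X m ∧ X m < X b ∧ IsTri S X Y q a b m ∧ 0 < area X Y a b m) ∨
  (i = 1 ∧ m = b ∧ ((∃ c ∈ S, X b < X c ∧ IsTri S X Y q a b c ∧ 0 < area X Y a b c) ∨
    ∀ s ∈ S, s ≠ a → s ≠ b → area X Y a b s < 0)) ∨
  (i = 2 ∧ m = a ∧ ∃ c ∈ S, X c < X a ∧ IsTri S X Y q a b c ∧ 0 < area X Y a b c)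

/-! ### Counting Delaunay edges -/

/-- Two Delaunay triangles `lmr`, `l'mr'` with common middle vertex `m`, both lying on the same
vertical side of `m`, coincide. -/
lemma triangle_unique {S : Finset V} {X Y q : V → ℝ} (hq : NoFour S X Y q)
    {l m r l' r' : V} (hl : l ∈ S) (hm : m ∈ S) (hr : r ∈ S) (hl' : l' ∈ S) (hr' : r' ∈ S)
    (hlm : X l < X m) (hmr : X m < X r) (hlm' : X l' < X m) (hmr' : X m < X r')
    (hD : 0 < area X Y l m r * area X Y l' m r')
    (h : IsTri S X Y q l m r) (h' : IsTri S X Y q l' m r') : l = l' ∧ r = r' := by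
  obtain ⟨A, B, C, el, em, er, hS⟩ := h
  obtain ⟨A', B', C', el', em', er', hS'⟩ := h'
  have gl' := hS l' hl'
  have gr' := hS r' hr'
  have gl := hS' l hl
  have gr := hS' r hr
  -- A positive combination of `l - m` and `r - m` is vertical, of height `area X Y l m r`.
  have h1 : (C - C') * area X Y l m r ≤ 0 := by
    have : (C - C') * area X Y l m r =
        -((X r - X m) * (q l + A' + B' * X l + C' * Y l) +
          (X m - X l) * (q r + A' + B' * X r + C' * Y r)) := by
      unfold area
      linear_combination (X r - X m) * el + (X m - X l) * er - (X r - X l) * em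
        + (X r - X l) * em'
    rw [this]
    have := mul_nonneg (sub_nonneg.2 hmr.le) gl
    have := mul_nonneg (sub_nonneg.2 hlm.le) gr
    linarith
  have h2 : 0 ≤ (C - C') * area X Y l' m r' := by
    have : (C - C') * area X Y l' m r' =
        ((X r' - X m) * (q l' + A + B * X l' + C * Y l') +
          (X m - X l') * (q r' + A + B * X r' + C * Y r')) := by
      unfold area
      linear_combination -(X r' - X m) * el' - (X m - X l') * er' - (X r' - X l') * em
        + (X r' - X l') * em'
    rw [this]
    have := mul_nonneg (sub_nonneg.2 hmr'.le) gl'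
    have := mul_nonneg (sub_nonneg.2 hlm'.le) gr'
    linarith
  have hC : C = C' := by
    have h3 : (C - C') ^ 2 * (area X Y l m r * area X Y l' m r') ≤ 0 := by
      have := mul_nonpos_of_nonpos_of_nonneg h1 h2
      linarith
    have h4 : (C - C') ^ 2 ≤ 0 := by
      by_contra hh
      exact absurd (mul_pos (not_le.1 hh) hD) (not_lt.2 h3)
    have := pow_eq_zero_iff (n := 2) (by norm_num) |>.1 (le_antisymm h4 (sq_nonneg (C - C')))
    linarith
  subst hC
  have hB : B = B' := by
    have e1 : 0 ≤ (B - B') * (X m - X l) := by linarith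
    have e2 : (B - B') * (X r - X m) ≤ 0 := by linarith
    have := nonneg_of_mul_nonneg_left e1 (sub_pos.2 hlm)
    have := nonpos_of_mul_nonpos_left e2 (sub_pos.2 hmr)
    linarith
  subst hB
  have hA : A = A' := by linarith
  subst hA
  have nlm : l ≠ m := fun e => by simp [e] at hlm
  have nmr : m ≠ r := fun e => by simp [e] at hmr
  have nlr : l ≠ r := fun e => by rw [e] at hlm; linarith
  have nlm' : l' ≠ m := fun e => by simp [e] at hlm'
  have nmr' : m ≠ r' := fun e => by simp [e] at hmr'
  have nlr' : r ≠ l' := fun e => by rw [e] at hmr; linarith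
  have nlr'' : l ≠ r' := fun e => by rw [e] at hlm; linarith
  constructor
  · by_contra hne
    exact hq A B C l hl m hm r hr l' hl' nlm nlr hne nmr nlm'.symm nlr' el em er el'
  · by_contra hne
    exact hq A B C l hl m hm r hr r' hr' nlm nlr nlr'' nmr nmr' hne el em er er'

/-- The triangle above an edge is found by rotating the supporting plane `F` about the edge until it
meets a further lifted point. -/
lemma exists_edge_label {S : Finset V} {X Y q : V → ℝ} (hX : Set.InjOn X S)
    (hcol : ∀ a ∈ S, ∀ b ∈ S, ∀ c ∈ S, a ≠ b → a ≠ c → b ≠ c → area X Y a b c ≠ 0)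
    {a b : V} (ha : a ∈ S) (hb : b ∈ S) (hab : X a < X b) (h : IsEdge S X Y q a b) :
    ∃ m ∈ S, ∃ i, Label S X Y q a b m i := by
  classical
  obtain ⟨A, B, C, ea, eb, hpos⟩ := h
  have nab : a ≠ b := fun e => by simp [e] at hab
  by_cases hne : (S.filter fun s => 0 < area X Y a b s).Nonempty
  · obtain ⟨c, hc, hmin⟩ := Finset.exists_min_image _
      (fun s => (q s + A + B * X s + C * Y s) / area X Y a b s) hne
    simp only [Finset.mem_filter] at hc hmin
    obtain ⟨hcS, hcp⟩ := hc
    have nca : c ≠ a := by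
      rintro rfl; simp [area] at hcp
    have ncb : c ≠ b := by
      rintro rfl
      unfold area at hcp; linarith
    set t := (q c + A + B * X c + C * Y c) / area X Y a b c with ht
    have htc : q c + A + B * X c + C * Y c = t * area X Y a b c := by
      rw [ht]; field_simp
    have ht0 : 0 < t := div_pos (hpos c hcS nca ncb) hcp
    -- The coefficients of `F - t * area X Y a b ·`.
    have htri : IsTri S X Y q a b c := by
      refine ⟨A + t * (X b - X a) * Y a - t * (Y b - Y a) * X a, B + t * (Y b - Y a),
        C - t * (X b - X a), ?_, ?_, ?_, ?_⟩
      · linear_combination ea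
      · linear_combination eb
      · unfold area at htc
        linear_combination htc
      · intro s hs
        have key : q s + (A + t * (X b - X a) * Y a - t * (Y b - Y a) * X a)
            + (B + t * (Y b - Y a)) * X s + (C - t * (X b - X a)) * Y s
            = (q s + A + B * X s + C * Y s) - t * area X Y a b s := by
          unfold area; ring
        rw [key]
        by_cases hsp : 0 < area X Y a b s
        · have := hmin s ⟨hs, hsp⟩
          rw [le_div_iff₀ hsp] at this
          linarith
        · have h0 : 0 ≤ q s + A + B * X s + C * Y s := by
            by_cases h1 : s = a
            · rw [h1, ea]
            by_cases h2 : s = b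
            · rw [h2, eb]
            exact (hpos s hs h1 h2).le
          have := mul_nonpos_of_nonneg_of_nonpos ht0.le (not_lt.1 hsp)
          linarith
    rcases lt_trichotomy (X c) (X a) with h1 | h1 | h1
    · exact ⟨a, ha, 2, Or.inr (Or.inr ⟨rfl, rfl, c, hcS, h1, htri, hcp⟩)⟩
    · exact absurd (hX hcS ha h1) nca
    rcases lt_trichotomy (X c) (X b) with h2 | h2 | h2
    · exact ⟨c, hcS, 0, Or.inl ⟨rfl, h1, h2, htri, hcp⟩⟩
    · exact absurd (hX hcS hb h2) ncb
    · exact ⟨b, hb, 1, Or.inr (Or.inl ⟨rfl, rfl, Or.inl ⟨c, hcS, h2, htri, hcp⟩⟩)⟩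
  · refine ⟨b, hb, 1, Or.inr (Or.inl ⟨rfl, rfl, Or.inr fun s hs hsa hsb => ?_⟩)⟩
    rcases lt_trichotomy (area X Y a b s) 0 with h1 | h1 | h1
    · exact h1
    · exact absurd h1 (hcol a ha b hb s hs nab hsa.symm hsb.symm)
    · exact absurd ⟨s, by simp [hs, h1]⟩ hne

/-- If all of `S` lies below the line `ab`, then no triangle `a'bc'` with middle vertex `b`
and `a' ≠ a` contains points directly above `b`. -/
lemma hull_edge_unique {S : Finset V} {X Y : V → ℝ} {a b a' c' : V}
    (ha' : a' ∈ S) (hc' : c' ∈ S) (hab : X a < X b) (hab' : X a' < X b) (hbc' : X b < X c')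
    (hD : 0 < area X Y a' b c')
    (h : ∀ s ∈ S, s ≠ a → s ≠ b → area X Y a b s < 0) : a = a' := by
  by_contra hne
  have n1 : a' ≠ b := fun e => by simp [e] at hab'
  have n2 : c' ≠ b := fun e => by simp [e] at hbc'
  have n3 : c' ≠ a := fun e => by rw [e] at hbc'; linarith
  have e1 := mul_neg_of_pos_of_neg (sub_pos.2 hbc') (h a' ha' (Ne.symm hne) n1)
  have e2 := mul_neg_of_pos_of_neg (sub_pos.2 hab') (h c' hc' n3 n2)
  have e3 := mul_pos (sub_pos.2 hab) hD
  have : (X c' - X b) * area X Y a b a' + (X b - X a') * area X Y a b c'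
      = (X b - X a) * area X Y a' b c' := by
    unfold area; ring
  linarith

lemma edge_label_unique {S : Finset V} {X Y q : V → ℝ} (hq : NoFour S X Y q)
    {a b a' b' m : V} {i : Fin 3} (ha : a ∈ S) (hb : b ∈ S) (ha' : a' ∈ S) (hb' : b' ∈ S)
    (hm : m ∈ S) (hab : X a < X b) (hab' : X a' < X b')
    (h : Label S X Y q a b m i) (h' : Label S X Y q a' b' m i) : a = a' ∧ b = b' := by
  rcases h with ⟨rfl, h1, h2, ht, hD⟩ | ⟨rfl, rfl, h⟩ | ⟨rfl, rfl, c, hc, hX, ht, hD⟩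
  · rcases h' with ⟨-, h1', h2', ht', hD'⟩ | ⟨h0, -⟩ | ⟨h0, -⟩
    · have swap : ∀ {x y z}, IsTri S X Y q x y z → IsTri S X Y q x z y :=
        fun ⟨A, B, C, e1, e2, e3, e4⟩ => ⟨A, B, C, e1, e3, e2, e4⟩
      refine triangle_unique hq ha hm hb ha' hb' h1 h2 h1' h2' ?_ (swap ht) (swap ht')
      have : area X Y a m b * area X Y a' m b' = area X Y a b m * area X Y a' b' m := by
        unfold area; ring
      rw [this]
      exact mul_pos hD hD'
    · simp at h0
    · simp at h0
  · rcases h' with ⟨h0, -⟩ | ⟨-, rfl, h'⟩ | ⟨h0, -⟩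
    · simp at h0
    · refine ⟨?_, rfl⟩
      rcases h with ⟨c, hc, hX, ht, hD⟩ | h <;> rcases h' with ⟨c', hc', hX', ht', hD'⟩ | h'
      · exact (triangle_unique hq ha hm hc ha' hc' hab hX hab' hX' (mul_pos hD hD') ht ht').1
      · exact (hull_edge_unique ha hc hab' hab hX hD h').symm
      · exact hull_edge_unique ha' hc' hab hab' hX' hD' h
      · by_contra hne
        have n1 : a ≠ m := fun e => by simp [e] at hab
        have n2 : a' ≠ m := fun e => by simp [e] at hab'
        have e1 := h a' ha' (Ne.symm hne) n2
        have e2 := h' a ha hne n1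
        unfold area at e1 e2
        linarith
    · simp at h0
  · rcases h' with ⟨h0, -⟩ | ⟨h0, -⟩ | ⟨-, rfl, c', hc', hX', ht', hD'⟩
    · simp at h0
    · simp at h0
    · refine ⟨rfl, ?_⟩
      have rot : ∀ {x y z}, IsTri S X Y q x y z → IsTri S X Y q z x y :=
        fun ⟨A, B, C, e1, e2, e3, e4⟩ => ⟨A, B, C, e3, e1, e2, e4⟩
      refine (triangle_unique hq hc hm hb hc' hb' hX hab hX' hab' ?_ (rot ht) (rot ht')).2
      have : area X Y c m b * area X Y c' m b' = area X Y m b c * area X Y m b' c' := by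
        unfold area; ring
      rw [this]
      exact mul_pos hD hD'

open Classical in
lemma card_edges_le {S : Finset V} {X Y q : V → ℝ} (hX : Set.InjOn X S)
    (hcol : ∀ a ∈ S, ∀ b ∈ S, ∀ c ∈ S, a ≠ b → a ≠ c → b ≠ c → area X Y a b c ≠ 0)
    (hq : NoFour S X Y q) :
    ((S ×ˢ S).filter fun p => X p.1 < X p.2 ∧ IsEdge S X Y q p.1 p.2).card ≤ 3 * S.card := by
  have : 3 * S.card = (S ×ˢ (Finset.univ : Finset (Fin 3))).card := by
    simp [mul_comm]
  rw [this]
  refine Finset.card_le_card_of_forall_subsingleton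
    (fun p k => Label S X Y q p.1 p.2 k.1 k.2) ?_ ?_
  · rintro ⟨a, b⟩ hp
    simp only [Finset.mem_filter, Finset.mem_product] at hp
    obtain ⟨m, hm, i, h⟩ := exists_edge_label hX hcol hp.1.1 hp.1.2 hp.2.1 hp.2.2
    exact ⟨(m, i), by simp [hm], h⟩
  · rintro ⟨m, i⟩ hk ⟨a, b⟩ ⟨hp, h⟩ ⟨a', b'⟩ ⟨hp', h'⟩
    simp only [Finset.mem_filter, Finset.mem_product] at hp hp' hk
    obtain ⟨rfl, rfl⟩ := edge_label_unique hq hp.1.1 hp.1.2 hp'.1.1 hp'.1.2 hk.1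
      hp.2.1 hp'.2.1 h h'
    rfl

/-! ### From Voronoi cells to Delaunay edges -/

/-- Only finitely many shears `p ↦ p 0 + ε * p 1` identify two points of `S`. -/
lemma exists_shear (S : Finset (EuclideanSpace ℝ (Fin 2))) :
    ∃ ε : ℝ, Set.InjOn (fun p : EuclideanSpace ℝ (Fin 2) => p 0 + ε * p 1) S := by
  classical
  obtain ⟨ε, hε⟩ := Infinite.exists_notMem_finset
    ((S ×ˢ S).image fun p => -(p.1 0 - p.2 0) / (p.1 1 - p.2 1))
  refine ⟨ε, fun p hp r hr h => ?_⟩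
  simp only at h
  have h1 : p 1 = r 1 := by
    by_contra hne
    refine hε (Finset.mem_image.2 ⟨(p, r), Finset.mem_product.2 ⟨hp, hr⟩, ?_⟩)
    rw [div_eq_iff (sub_ne_zero.2 hne)]
    linarith
  have h0 : p 0 = r 0 := by rw [h1] at h; linarith
  ext i
  fin_cases i
  · exact h0
  · exact h1

lemma dist_lt_iff (x a s : EuclideanSpace ℝ (Fin 2)) :
    dist x a < dist x s ↔
      (x 0 - a 0) ^ 2 + (x 1 - a 1) ^ 2 < (x 0 - s 0) ^ 2 + (x 1 - s 1) ^ 2 := by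
  rw [EuclideanSpace.dist_eq, EuclideanSpace.dist_eq,
    Real.sqrt_lt_sqrt_iff (by positivity)]
  simp [Fin.sum_univ_two, Real.dist_eq, sq_abs]

/-- A disk containing only the points `a`, `b` of `S` can be shrunk so that both are on its boundary.
Here `a` is the farther one, and the disk is shrunk by a homothety centred at `a`. -/
lemma exists_power_function {S : Finset (EuclideanSpace ℝ (Fin 2))}
    {a b x : EuclideanSpace ℝ (Fin 2)} (ε : ℝ) (hne : a ≠ b) (hx : x ∈ SecondOrderCell S a b)
    (hle : (x 0 - b 0) ^ 2 + (x 1 - b 1) ^ 2 ≤ (x 0 - a 0) ^ 2 + (x 1 - a 1) ^ 2) :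
    IsEdge S (fun p => p 0 + ε * p 1) (fun p => p 1) (fun p => p 0 ^ 2 + p 1 ^ 2) a b := by
  have hd : 0 < (b 0 - a 0) ^ 2 + (b 1 - a 1) ^ 2 := by
    by_contra h
    apply hne
    have h0 : b 0 - a 0 = 0 := by nlinarith [sq_nonneg (b 0 - a 0), sq_nonneg (b 1 - a 1)]
    have h1 : b 1 - a 1 = 0 := by nlinarith [sq_nonneg (b 0 - a 0), sq_nonneg (b 1 - a 1)]
    ext i
    fin_cases i
    · simp only [Fin.zero_eta]; linarith
    · simp only [Fin.mk_one]; linarith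
  -- `t` makes `‖p - x‖² - ‖a - x‖² + t * ‖p - a‖²` vanish at `p = b`.
  obtain ⟨t, ht, htb⟩ : ∃ t : ℝ, 0 ≤ t ∧ ((x 0 - b 0) ^ 2 + (x 1 - b 1) ^ 2)
      - ((x 0 - a 0) ^ 2 + (x 1 - a 1) ^ 2) + t * ((b 0 - a 0) ^ 2 + (b 1 - a 1) ^ 2) = 0 := by
    refine ⟨(((x 0 - a 0) ^ 2 + (x 1 - a 1) ^ 2) - ((x 0 - b 0) ^ 2 + (x 1 - b 1) ^ 2)) /
      ((b 0 - a 0) ^ 2 + (b 1 - a 1) ^ 2), div_nonneg (by linarith) hd.le, ?_⟩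
    rw [div_mul_cancel₀ _ hd.ne']
    ring
  have h1t : 0 < 1 + t := by linarith
  obtain ⟨B, hB⟩ : ∃ B, (1 + t) * B = -2 * x 0 - 2 * t * a 0 :=
    ⟨_, mul_div_cancel₀ _ h1t.ne'⟩
  obtain ⟨C, hC⟩ : ∃ C, (1 + t) * C = -2 * x 1 - 2 * t * a 1 :=
    ⟨_, mul_div_cancel₀ _ h1t.ne'⟩
  obtain ⟨A, hA⟩ : ∃ A, (1 + t) * A = x 0 ^ 2 + x 1 ^ 2 - ((x 0 - a 0) ^ 2 + (x 1 - a 1) ^ 2)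
      + t * (a 0 ^ 2 + a 1 ^ 2) := ⟨_, mul_div_cancel₀ _ h1t.ne'⟩
  have key : ∀ p : EuclideanSpace ℝ (Fin 2),
      (1 + t) * (p 0 ^ 2 + p 1 ^ 2 + A + B * (p 0 + ε * p 1) + (C - ε * B) * p 1)
      = ((x 0 - p 0) ^ 2 + (x 1 - p 1) ^ 2)
        - ((x 0 - a 0) ^ 2 + (x 1 - a 1) ^ 2) + t * ((p 0 - a 0) ^ 2 + (p 1 - a 1) ^ 2) := by
    intro p
    linear_combination hA + p 0 * hB + p 1 * hC
  refine ⟨A, B, C - ε * B, ?_, ?_, ?_⟩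
  · have := key a
    rw [show ((x 0 - a 0) ^ 2 + (x 1 - a 1) ^ 2)
        - ((x 0 - a 0) ^ 2 + (x 1 - a 1) ^ 2) + t * ((a 0 - a 0) ^ 2 + (a 1 - a 1) ^ 2) = 0 by
      ring] at this
    exact (mul_eq_zero.1 this).resolve_left h1t.ne'
  · have := key b
    rw [htb] at this
    exact (mul_eq_zero.1 this).resolve_left h1t.ne'
  · intro s hs hsa hsb
    have h1 := (dist_lt_iff x a s).1 ((le_max_left _ _).trans_lt (hx s hs hsa hsb))
    have h2 : 0 ≤ t * ((s 0 - a 0) ^ 2 + (s 1 - a 1) ^ 2) := by positivity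
    refine (mul_pos_iff_of_pos_left h1t).1 ?_
    rw [key s]
    linarith

lemma IsEdge.symm {S : Finset V} {X Y q : V → ℝ} {a b : V} (h : IsEdge S X Y q a b) :
    IsEdge S X Y q b a := by
  obtain ⟨A, B, C, h1, h2, h3⟩ := h
  exact ⟨A, B, C, h2, h1, fun s hs hb ha => h3 s hs ha hb⟩

lemma isEdge_of_cell {S : Finset (EuclideanSpace ℝ (Fin 2))}
    {a b : EuclideanSpace ℝ (Fin 2)} (ε : ℝ) (hne : a ≠ b)
    (h : (SecondOrderCell S a b).Nonempty) :
    IsEdge S (fun p => p 0 + ε * p 1) (fun p => p 1) (fun p => p 0 ^ 2 + p 1 ^ 2) a b := by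
  obtain ⟨x, hx⟩ := h
  rcases le_total ((x 0 - b 0) ^ 2 + (x 1 - b 1) ^ 2) ((x 0 - a 0) ^ 2 + (x 1 - a 1) ^ 2)
    with hle | hle
  · exact exists_power_function ε hne hx hle
  · refine (exists_power_function ε hne.symm (x := x) ?_ hle).symm
    intro s hs hb ha
    rw [max_comm]
    exact hx s hs ha hb

lemma collinear_of_area {a b c : EuclideanSpace ℝ (Fin 2)} {ε : ℝ}
    (hab : a 0 + ε * a 1 ≠ b 0 + ε * b 1)
    (h : area (fun p : EuclideanSpace ℝ (Fin 2) => p 0 + ε * p 1) (fun p => p 1) a b c = 0) :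
    Collinear ℝ ({a, b, c} : Set (EuclideanSpace ℝ (Fin 2))) := by
  rw [collinear_iff_of_mem (p₀ := a) (by simp)]
  have hd : (b 0 + ε * b 1) - (a 0 + ε * a 1) ≠ 0 := sub_ne_zero.2 hab.symm
  obtain ⟨r, hr⟩ : ∃ r : ℝ, r * ((b 0 + ε * b 1) - (a 0 + ε * a 1)) =
      (c 0 + ε * c 1) - (a 0 + ε * a 1) := ⟨_, div_mul_cancel₀ _ hd⟩
  simp only [area] at h
  have e1 : c 1 = r * (b 1 - a 1) + a 1 := by
    apply mul_left_cancel₀ hd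
    linear_combination h - (b 1 - a 1) * hr
  have e0 : c 0 = r * (b 0 - a 0) + a 0 := by
    linear_combination -hr - ε * e1
  refine ⟨b - a, ?_⟩
  rintro p (rfl | rfl | rfl)
  · exact ⟨0, by simp⟩
  · exact ⟨1, by simp⟩
  · refine ⟨r, ?_⟩
    ext i
    fin_cases i
    · simpa using e0
    · simpa using e1

lemma noFour_of_not_cocircular {S : Finset (EuclideanSpace ℝ (Fin 2))} (ε : ℝ)
    (hcirc : ∀ a ∈ S, ∀ b ∈ S, ∀ c ∈ S, ∀ d ∈ S,
      a ≠ b → a ≠ c → a ≠ d → b ≠ c → b ≠ d → c ≠ d → ¬ Cocircular a b c d) :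
    NoFour S (fun p => p 0 + ε * p 1) (fun p => p 1) (fun p => p 0 ^ 2 + p 1 ^ 2) := by
  intro A B C a ha b hb c hc d hd h1 h2 h3 h4 h5 h6 ea eb ec ed
  have key : ∀ p : EuclideanSpace ℝ (Fin 2),
      p 0 ^ 2 + p 1 ^ 2 + A + B * (p 0 + ε * p 1) + C * p 1 = 0 →
      dist p !₂[-B / 2, -(C + ε * B) / 2] =
        √((B / 2) ^ 2 + ((C + ε * B) / 2) ^ 2 - A) := by
    intro p hp
    rw [EuclideanSpace.dist_eq]
    congr 1
    simp only [Fin.sum_univ_two, Real.dist_eq, sq_abs, Matrix.cons_val_zero, Matrix.cons_val_one]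
    linear_combination hp
  exact hcirc a ha b hb c hc d hd h1 h2 h3 h4 h5 h6
    ⟨_, _, key a ea, key b eb, key c ec, key d ed⟩

end VoronoiAux

open VoronoiAux in
/-- The number of nonempty cells of the second-order Voronoi diagram of `n` points
in general position in the plane (no three collinear, no four cocircular) is at
most `3n`, in particular `O(n)`. -/
theorem second_order_voronoi_cell_count (n : ℕ)
    (S : Finset (EuclideanSpace ℝ (Fin 2))) (hcard : S.card = n)
    (hcol : ∀ a ∈ S, ∀ b ∈ S, ∀ c ∈ S, a ≠ b → a ≠ c → b ≠ c →
      ¬ Collinear ℝ ({a, b, c} : Set (EuclideanSpace ℝ (Fin 2))))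
    (hcirc : ∀ a ∈ S, ∀ b ∈ S, ∀ c ∈ S, ∀ d ∈ S,
      a ≠ b → a ≠ c → a ≠ d → b ≠ c → b ≠ d → c ≠ d →
      ¬ Cocircular a b c d) :
    Set.ncard {P : Set (EuclideanSpace ℝ (Fin 2)) |
        ∃ a ∈ S, ∃ b ∈ S, a ≠ b ∧ P = ({a, b} : Set (EuclideanSpace ℝ (Fin 2))) ∧ (SecondOrderCell S a b).Nonempty}
      ≤ 3 * n := by
  classical
  obtain ⟨ε, hX⟩ := exists_shear S
  have hcount := card_edges_le hX (Y := fun p => p 1) (q := fun p => p 0 ^ 2 + p 1 ^ 2)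
    (fun a ha b hb c hc h1 h2 h3 h => hcol a ha b hb c hc h1 h2 h3
      (collinear_of_area (fun e => h1 (hX ha hb e)) h))
    (noFour_of_not_cocircular ε hcirc)
  rw [hcard] at hcount
  refine le_trans ?_ hcount
  refine le_trans ?_ (Finset.card_image_le (f := fun p =>
    ({p.1, p.2} : Set (EuclideanSpace ℝ (Fin 2)))))
  rw [← Set.ncard_coe_finset]
  refine Set.ncard_le_ncard ?_ (Finset.finite_toSet _)
  rintro P ⟨a, ha, b, hb, hne, rfl, hcell⟩
  have hedge := isEdge_of_cell ε hne hcell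
  rw [Finset.mem_coe, Finset.mem_image]
  rcases lt_trichotomy (a 0 + ε * a 1) (b 0 + ε * b 1) with h | h | h
  · exact ⟨(a, b), by simp only [Finset.mem_filter, Finset.mem_product]; exact ⟨⟨ha, hb⟩, h, hedge⟩,
      rfl⟩
  · exact absurd (hX ha hb h) hne
  · exact ⟨(b, a), by
      simp only [Finset.mem_filter, Finset.mem_product]; exact ⟨⟨hb, ha⟩, h, hedge.symm⟩,
      Set.pair_comm b a⟩
end
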